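/- Assume: (a) ψ : X → ℝ^d is bounded measurable; (b) there exists θ_cs ∈ ℝ^d such that c_s(y) = θ_csᵀψ(y) + 1 for all y ∈ X; (c) for every x ∈ X, the image of P(x,·) under ψ is absolutely continuous with respect to the Gaussian measure on ℝ^d with mean ψ(x) and identity covariance, with density ℓ(z | x) satisfying ℓ(z | x) ≤ L for all z ∈ ℝ^d and x ∈ X, for some constant L < ∞. Then there exists a constant ℓ_M < ∞ such that for all x ∈ X and all θ¹, θ² ∈ ℝ^d, ‖ ∫ ψ(x) (𝟙{(θ¹)ᵀψ(y) < c_s(y)} − 𝟙{(θ²)ᵀψ(y) < c_s(y)}) ψ(y)ᵀ P(x,dy) ‖ ≤ ℓ_M ‖θ¹ − θ²‖. -/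

import Mathlib

open MeasureTheory ProbabilityTheory Matrix

/-- The Euclidean norm on `ℝ^d` (vectors as functions `Fin d → ℝ`). -/
noncomputable def euclNorm {d : ℕ} (v : Fin d → ℝ) : ℝ :=
  Real.sqrt (∑ i, v i ^ 2)

/-- The Frobenius norm of a `d × d` real matrix. -/
noncomputable def frobNorm {d : ℕ} (M : Matrix (Fin d) (Fin d) ℝ) : ℝ :=
  Real.sqrt (∑ i, ∑ j, M i j ^ 2)

/-!
Write `a = θ₁ - θcs` and `b = θ₂ - θcs`, so that the two indicators are those of the half-spaces
`a ⬝ᵥ z < 1` and `b ⬝ᵥ z < 1` at `z = ψ y`. If `‖z‖ ≤ C` and `z` lies in the first half-space but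
not in the second, then `1 ≤ b ⬝ᵥ z ≤ 1 + C ‖a - b‖`. Since `b ⬝ᵥ z ≥ 1` with `‖z‖ ≤ C`, some
coordinate of `b` is bounded away from zero; integrating out that coordinate first shows that
`b ⬝ᵥ z` has a bounded density under the product reference measure. So this slab, and with it the
set where the indicators differ, has measure `O(‖a - b‖)`.
-/

open Set
open scoped ENNReal NNReal symmDiff

section EuclNorm

variable {d : ℕ}

lemma euclNorm_nonneg (v : Fin d → ℝ) : 0 ≤ euclNorm v := Real.sqrt_nonneg _

lemma euclNorm_eq_norm_toLp (v : Fin d → ℝ) : euclNorm v = ‖WithLp.toLp 2 v‖ := by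
  simp only [euclNorm, EuclideanSpace.norm_eq, Real.norm_eq_abs, sq_abs]

lemma euclNorm_sub_comm (u v : Fin d → ℝ) : euclNorm (u - v) = euclNorm (v - u) := by
  simp only [euclNorm_eq_norm_toLp, WithLp.toLp_sub, norm_sub_rev]

lemma euclNorm_smul (c : ℝ) (v : Fin d → ℝ) : euclNorm (c • v) = |c| * euclNorm v := by
  simp only [euclNorm_eq_norm_toLp, WithLp.toLp_smul, norm_smul, Real.norm_eq_abs]

lemma abs_apply_le_euclNorm (v : Fin d → ℝ) (i : Fin d) : |v i| ≤ euclNorm v := by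
  simpa only [euclNorm_eq_norm_toLp, Real.norm_eq_abs] using PiLp.norm_apply_le (WithLp.toLp 2 v) i

lemma dotProduct_le_euclNorm_mul_euclNorm (u v : Fin d → ℝ) :
    u ⬝ᵥ v ≤ euclNorm u * euclNorm v :=
  Real.sum_mul_le_sqrt_mul_sqrt _ _ _

lemma measurable_euclNorm : Measurable (euclNorm : (Fin d → ℝ) → ℝ) := by
  unfold euclNorm
  fun_prop

lemma frobNorm_vecMulVec (u v : Fin d → ℝ) :
    frobNorm (vecMulVec u v) = euclNorm u * euclNorm v := by
  simp only [frobNorm, euclNorm, vecMulVec_apply, mul_pow]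
  rw [← Finset.sum_mul_sum, Real.sqrt_mul (Finset.sum_nonneg fun _ _ => sq_nonneg _)]

lemma euclNorm_integral_le_of_ae_le {α : Type*} [MeasurableSpace α] {μ : Measure α}
    {f : α → Fin d → ℝ} {g : α → ℝ} (hf : ∀ j, Integrable (f · j) μ) (hg : Integrable g μ)
    (hfg : ∀ᵐ x ∂μ, euclNorm (f x) ≤ g x) :
    euclNorm (fun j => ∫ x, f x j ∂μ) ≤ ∫ x, g x ∂μ := by
  have hint : WithLp.toLp 2 (fun j => ∫ x, f x j ∂μ) = ∫ x, WithLp.toLp 2 (f x) ∂μ := by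
    ext j
    exact (eval_integral_piLp (f := fun x => WithLp.toLp 2 (f x)) hf j).symm
  rw [euclNorm_eq_norm_toLp, hint]
  exact norm_integral_le_of_norm_le hg (by simpa only [euclNorm_eq_norm_toLp] using hfg)

lemma exists_abs_inv_le_of_one_le_dotProduct {b z : Fin d → ℝ} {C : ℝ} (hz : euclNorm z ≤ C)
    (hbz : 1 ≤ b ⬝ᵥ z) : ∃ i, b i ≠ 0 ∧ |(b i)⁻¹| ≤ d * C := by
  have hd : 0 < (d : ℝ) := by
    rcases Nat.eq_zero_or_pos d with rfl | hd
    · norm_num [dotProduct] at hbz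
    · exact_mod_cast hd
  have hsum : ∑ _i : Fin d, (d : ℝ)⁻¹ ≤ ∑ i, b i * z i := by
    rw [Finset.sum_const, Finset.card_univ, Fintype.card_fin, nsmul_eq_mul,
      mul_inv_cancel₀ hd.ne']
    exact hbz
  obtain ⟨i, -, hi⟩ :=
    Finset.exists_le_of_sum_le (Finset.univ_nonempty_iff.2 ⟨⟨0, by exact_mod_cast hd⟩⟩) hsum
  have hbC : (d : ℝ)⁻¹ ≤ |b i| * C := calc
    (d : ℝ)⁻¹ ≤ |b i| * |z i| := hi.trans (abs_mul (b i) (z i) ▸ le_abs_self _)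
    _ ≤ |b i| * C := by gcongr; exact (abs_apply_le_euclNorm z i).trans hz
  have hb : b i ≠ 0 := by
    intro h
    rw [h, abs_zero, zero_mul] at hbC
    exact hbC.not_gt (inv_pos.2 hd)
  refine ⟨i, hb, ?_⟩
  rw [abs_inv, inv_le_iff_one_le_mul₀ (abs_pos.2 hb)]
  rw [inv_le_iff_one_le_mul₀ hd] at hbC
  linarith

end EuclNorm

section BoundedDensity

lemma gaussianPDFReal_le (m : ℝ) (v : ℝ≥0) (x : ℝ) :
    gaussianPDFReal m v x ≤ (√(2 * Real.pi * v))⁻¹ := by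
  rw [gaussianPDFReal]
  refine mul_le_of_le_one_right (by positivity) (Real.exp_le_one_iff.2 ?_)
  exact div_nonpos_of_nonpos_of_nonneg (neg_nonpos.2 (sq_nonneg _)) (by positivity)

lemma withDensity_le_smul {α : Type*} [MeasurableSpace α] {μ : Measure α} {f : α → ℝ≥0∞}
    {c : ℝ≥0∞} (hf : ∀ x, f x ≤ c) : μ.withDensity f ≤ c • μ :=
  (withDensity_mono (ae_of_all _ hf)).trans (withDensity_const c).le

lemma gaussianReal_le_smul_volume (m : ℝ) {v : ℝ≥0} (hv : v ≠ 0) :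
    gaussianReal m v ≤ ENNReal.ofReal (√(2 * Real.pi * v))⁻¹ • volume := by
  rw [gaussianReal_of_var_ne_zero m hv]
  exact withDensity_le_smul fun x => ENNReal.ofReal_le_ofReal (gaussianPDFReal_le m v x)

variable {ι : Type*} [Fintype ι]

lemma pi_le_of_forall_update_preimage_le [DecidableEq ι] {E : ι → Type*}
    [∀ i, MeasurableSpace (E i)] (ν : ∀ i, Measure (E i)) [∀ i, IsProbabilityMeasure (ν i)] (i : ι)
    {S : Set (∀ i, E i)} (hS : MeasurableSet S) {c : ℝ≥0∞}
    (h : ∀ z, ν i (Function.update z i ⁻¹' S) ≤ c) :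
    Measure.pi ν S ≤ c := by
  obtain ⟨z⟩ : Nonempty (∀ i, E i) := ⟨fun i => (ν i).nonempty_of_neZero.some⟩
  have hfib (z : ∀ i, E i) :
      ∫⁻ t, S.indicator 1 (Function.update z i t) ∂ν i = ν i (Function.update z i ⁻¹' S) :=
    lintegral_indicator_one (measurable_update z hS)
  calc Measure.pi ν S = ∫⁻ z, S.indicator 1 z ∂Measure.pi ν := (lintegral_indicator_one hS).symm
    _ = (∫⋯∫⁻_Finset.univ.erase i, fun z => ν i (Function.update z i ⁻¹' S) ∂ν) z := by
        rw [lintegral_eq_lmarginal_univ z,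
          lmarginal_erase' _ (measurable_one.indicator hS) (Finset.mem_univ i)]
        simp only [hfib]
    _ ≤ (∫⋯∫⁻_Finset.univ.erase i, fun _ => c ∂ν) z := lmarginal_mono h z
    _ = c := by simp [lmarginal]

lemma dotProduct_update [DecidableEq ι] {R : Type*} [NonUnitalNonAssocSemiring R]
    (b z : ι → R) (i : ι) (t : R) :
    b ⬝ᵥ Function.update z i t = b i * t + b ⬝ᵥ Function.update z i 0 := by
  have hz : Function.update z i t = Pi.single i t + Function.update z i 0 := by
    ext j
    rcases eq_or_ne j i with rfl | hj
    · simp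
    · simp [hj]
  rw [hz, dotProduct_add, dotProduct_single]

lemma measurable_dotProduct (b : ι → ℝ) : Measurable (b ⬝ᵥ · : (ι → ℝ) → ℝ) := by
  unfold dotProduct
  fun_prop

lemma map_dotProduct_pi_le {ν : ι → Measure ℝ} [∀ i, IsProbabilityMeasure (ν i)] {B : ℝ≥0∞}
    {i : ι} (hν : ν i ≤ B • volume) {b : ι → ℝ} (hb : b i ≠ 0) :
    (Measure.pi ν).map (b ⬝ᵥ ·) ≤ (B * ENNReal.ofReal |(b i)⁻¹|) • volume := by
  classical
  have hmeas := measurable_dotProduct b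
  refine Measure.le_intro fun S hS _ => ?_
  rw [Measure.map_apply hmeas hS]
  refine pi_le_of_forall_update_preimage_le ν i (hmeas hS) fun z => ?_
  set s := b ⬝ᵥ Function.update z i 0
  have hfib : Function.update z i ⁻¹' ((b ⬝ᵥ ·) ⁻¹' S) = (b i * ·) ⁻¹' ((· + s) ⁻¹' S) := by
    ext t
    simp only [mem_preimage, dotProduct_update b z i t, s]
  calc ν i (Function.update z i ⁻¹' ((b ⬝ᵥ ·) ⁻¹' S))
      ≤ B * volume ((b i * ·) ⁻¹' ((· + s) ⁻¹' S)) := hfib ▸ hν _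
    _ = B * (ENNReal.ofReal |(b i)⁻¹| * volume S) := by
        rw [Real.volume_preimage_mul_left hb, measure_preimage_add_right]
    _ = ((B * ENNReal.ofReal |(b i)⁻¹|) • volume) S := (mul_assoc _ _ _).symm

end BoundedDensity

section UnitHalfSpace

/-- The open half-space `{z | aᵀz < 1}` of `ℝ^d`. With `a = θ - θcs`, its preimage under `ψ` is the
event `θᵀψ(y) < c_s(y)`; `a = 0` is allowed and gives the whole space. -/
def unitHalfSpace {d : ℕ} (a : Fin d → ℝ) : Set (Fin d → ℝ) := {z | a ⬝ᵥ z < 1}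

variable {d : ℕ} {μ : Measure (Fin d → ℝ)} {C : ℝ}

lemma measurableSet_unitHalfSpace (a : Fin d → ℝ) : MeasurableSet (unitHalfSpace a) :=
  measurable_dotProduct a measurableSet_Iio

lemma indicator_unitHalfSpace_sub (θ θ' z : Fin d → ℝ) :
    (unitHalfSpace (θ - θ')).indicator 1 z = if θ ⬝ᵥ z < θ' ⬝ᵥ z + 1 then (1 : ℝ) else 0 := by
  classical
  rw [indicator_apply]
  refine if_congr ?_ rfl rfl
  rw [unitHalfSpace, mem_ofPred_eq, sub_dotProduct, sub_lt_iff_lt_add']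

lemma dotProduct_mem_Icc_of_mem_unitHalfSpace_diff {a b z : Fin d → ℝ} (hz : euclNorm z ≤ C)
    (h : z ∈ unitHalfSpace a \ unitHalfSpace b) :
    b ⬝ᵥ z ∈ Icc 1 (1 + C * euclNorm (a - b)) := by
  obtain ⟨ha : a ⬝ᵥ z < 1, hb : ¬ b ⬝ᵥ z < 1⟩ := h
  refine ⟨not_lt.1 hb, ?_⟩
  calc b ⬝ᵥ z = a ⬝ᵥ z + (b - a) ⬝ᵥ z := by rw [sub_dotProduct]; ring
    _ ≤ 1 + euclNorm (b - a) * euclNorm z :=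
        add_le_add ha.le (dotProduct_le_euclNorm_mul_euclNorm _ _)
    _ ≤ 1 + C * euclNorm (a - b) := by
        rw [euclNorm_sub_comm, mul_comm]
        gcongr
        exact euclNorm_nonneg _

lemma euclNorm_integral_indicator_sub_indicator_le [IsFiniteMeasure μ] {S T : Set (Fin d → ℝ)}
    (hS : MeasurableSet S) (hT : MeasurableSet T) (hC : ∀ᵐ z ∂μ, euclNorm z ≤ C) :
    euclNorm (fun j => ∫ z, (S.indicator 1 z - T.indicator 1 z) * z j ∂μ) ≤
      C * μ.real (S ∆ T) := by
  have hbound : ∀ᵐ z ∂μ, euclNorm ((S.indicator 1 z - T.indicator 1 z : ℝ) • z) ≤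
      (S ∆ T).indicator (fun _ => C) z := by
    filter_upwards [hC] with z hz
    rw [euclNorm_smul, ← abs_indicator_symmDiff]
    by_cases h : z ∈ S ∆ T <;> simp [h, hz]
  have hg : Integrable ((S ∆ T).indicator fun _ => C) μ :=
    (integrable_const C).indicator (hS.symmDiff hT)
  have hf (j : Fin d) : Integrable (fun z => (S.indicator 1 z - T.indicator 1 z) * z j) μ := by
    refine hg.mono' ?_ (hbound.mono fun z hz => (abs_apply_le_euclNorm _ j).trans hz)
    exact (((measurable_one.indicator hS).sub (measurable_one.indicator hT)).mul
      (measurable_pi_apply j)).aestronglyMeasurable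
  calc _ ≤ ∫ z, (S ∆ T).indicator (fun _ => C) z ∂μ :=
        euclNorm_integral_le_of_ae_le (f := fun z => (S.indicator 1 z - T.indicator 1 z : ℝ) • z)
          hf hg hbound
    _ = C * μ.real (S ∆ T) := by
        rw [integral_indicator_const C (hS.symmDiff hT), smul_eq_mul, mul_comm]

variable {ν : Fin d → Measure ℝ} [∀ i, IsProbabilityMeasure (ν i)] {B L : ℝ≥0}

lemma measureReal_unitHalfSpace_diff_le (hν : ∀ i, ν i ≤ (B : ℝ≥0∞) • volume)
    (hμ : μ ≤ (L : ℝ≥0∞) • Measure.pi ν) (hC : ∀ᵐ z ∂μ, euclNorm z ≤ C) (a b : Fin d → ℝ) :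
    μ.real (unitHalfSpace a \ unitHalfSpace b) ≤ d * B * L * C ^ 2 * euclNorm (a - b) := by
  have he : 0 ≤ euclNorm (a - b) := euclNorm_nonneg _
  refine ENNReal.toReal_le_of_le_ofReal (by positivity) ?_
  by_cases h : ∃ i, b i ≠ 0 ∧ |(b i)⁻¹| ≤ d * C
  swap
  · have hnull : μ (unitHalfSpace a \ unitHalfSpace b) = 0 :=
      measure_eq_zero_iff_ae_notMem.2 <| hC.mono fun z hz hmem =>
        h (exists_abs_inv_le_of_one_le_dotProduct hz
          (dotProduct_mem_Icc_of_mem_unitHalfSpace_diff hz hmem).1)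
    exact hnull.trans_le zero_le
  obtain ⟨i, hb, hi⟩ := h
  set I := Icc 1 (1 + C * euclNorm (a - b))
  have hI : volume I = ENNReal.ofReal (C * euclNorm (a - b)) := by
    rw [Real.volume_Icc, add_sub_cancel_left]
  calc μ (unitHalfSpace a \ unitHalfSpace b)
      ≤ μ ((b ⬝ᵥ ·) ⁻¹' I) := measure_mono_ae <| hC.mono fun z hz hmem =>
        dotProduct_mem_Icc_of_mem_unitHalfSpace_diff hz hmem
    _ ≤ L * (Measure.pi ν).map (b ⬝ᵥ ·) I := by
        rw [Measure.map_apply (measurable_dotProduct b) measurableSet_Icc]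
        exact hμ _
    _ ≤ L * (B * ENNReal.ofReal |(b i)⁻¹| * volume I) := by
        gcongr
        exact map_dotProduct_pi_le (hν i) hb I
    _ ≤ L * (B * ENNReal.ofReal (d * C) * ENNReal.ofReal (C * euclNorm (a - b))) := by
        rw [hI]
        gcongr
    _ = ENNReal.ofReal (d * B * L * C ^ 2 * euclNorm (a - b)) := by
        have hdC : 0 ≤ d * C := (abs_nonneg _).trans hi
        rw [← ENNReal.ofReal_coe_nnreal, ← ENNReal.ofReal_coe_nnreal (p := B),
          ← ENNReal.ofReal_mul B.coe_nonneg, ← ENNReal.ofReal_mul (by positivity),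
          ← ENNReal.ofReal_mul L.coe_nonneg]
        ring_nf

lemma measureReal_unitHalfSpace_symmDiff_le (hν : ∀ i, ν i ≤ (B : ℝ≥0∞) • volume)
    (hμ : μ ≤ (L : ℝ≥0∞) • Measure.pi ν) (hC : ∀ᵐ z ∂μ, euclNorm z ≤ C) (a b : Fin d → ℝ) :
    μ.real (unitHalfSpace a ∆ unitHalfSpace b) ≤ 2 * d * B * L * C ^ 2 * euclNorm (a - b) := by
  have hab := measureReal_unitHalfSpace_diff_le hν hμ hC a b
  have hba := measureReal_unitHalfSpace_diff_le hν hμ hC b a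
  rw [euclNorm_sub_comm] at hba
  refine (measureReal_union_le _ _).trans ?_
  linarith

lemma euclNorm_integral_indicator_unitHalfSpace_sub_le (hν : ∀ i, ν i ≤ (B : ℝ≥0∞) • volume)
    (hμ : μ ≤ (L : ℝ≥0∞) • Measure.pi ν) (hC0 : 0 ≤ C) (hC : ∀ᵐ z ∂μ, euclNorm z ≤ C)
    (a b : Fin d → ℝ) :
    euclNorm (fun j =>
        ∫ z, ((unitHalfSpace a).indicator 1 z - (unitHalfSpace b).indicator 1 z) * z j ∂μ) ≤
      C * (2 * d * B * L * C ^ 2 * euclNorm (a - b)) := by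
  have : IsFiniteMeasure ((L : ℝ≥0∞) • Measure.pi ν) := Measure.smul_finite _ ENNReal.coe_ne_top
  have : IsFiniteMeasure μ := isFiniteMeasure_of_le _ hμ
  exact (euclNorm_integral_indicator_sub_indicator_le (measurableSet_unitHalfSpace a)
    (measurableSet_unitHalfSpace b) hC).trans
      (mul_le_mul_of_nonneg_left (measureReal_unitHalfSpace_symmDiff_le hν hμ hC a b) hC0)

end UnitHalfSpace

theorem conditional_indicator_difference_lipschitz_general
    {X : Type*} [MeasurableSpace X] {d : ℕ} (P : X → Measure X)
    (ψ : X → Fin d → ℝ) (hψm : Measurable ψ) (hψb : ∃ C : ℝ, ∀ x, euclNorm (ψ x) ≤ C)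
    (cs : X → ℝ) (θcs : Fin d → ℝ) (hspan : ∀ y, cs y = θcs ⬝ᵥ ψ y + 1)
    (ν : X → Fin d → Measure ℝ) [∀ x i, IsProbabilityMeasure (ν x i)] (B L : ℝ≥0)
    (hν : ∀ x i, ν x i ≤ (B : ℝ≥0∞) • volume)
    (hP : ∀ x, (P x).map ψ ≤ (L : ℝ≥0∞) • Measure.pi (ν x)) :
    ∃ ℓM : ℝ, ∀ (x : X) (θ₁ θ₂ : Fin d → ℝ),
      frobNorm (Matrix.of fun i j =>
        ∫ y, ψ x i *
          (((if θ₁ ⬝ᵥ ψ y < cs y then (1 : ℝ) else 0) -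
            (if θ₂ ⬝ᵥ ψ y < cs y then (1 : ℝ) else 0)) * ψ y j) ∂(P x)) ≤
      ℓM * euclNorm (θ₁ - θ₂) := by
  obtain ⟨C, hC⟩ := hψb
  refine ⟨C * (C * (2 * d * B * L * C ^ 2)), fun x θ₁ θ₂ => ?_⟩
  set H := fun θ => unitHalfSpace (θ - θcs)
  have hH (θ : Fin d → ℝ) : MeasurableSet (H θ) := measurableSet_unitHalfSpace _
  set w : Fin d → ℝ := fun j =>
    ∫ z, ((H θ₁).indicator 1 z - (H θ₂).indicator 1 z) * z j ∂(P x).map ψ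
  have hrank : (Matrix.of fun i j => ∫ y, ψ x i *
      (((if θ₁ ⬝ᵥ ψ y < cs y then (1 : ℝ) else 0) -
        (if θ₂ ⬝ᵥ ψ y < cs y then (1 : ℝ) else 0)) * ψ y j) ∂(P x)) = vecMulVec (ψ x) w := by
    ext i j
    simp only [Matrix.of_apply, vecMulVec_apply, integral_const_mul, hspan,
      ← indicator_unitHalfSpace_sub, w]
    rw [integral_map hψm.aemeasurable]
    exact (((measurable_one.indicator (hH θ₁)).sub (measurable_one.indicator (hH θ₂))).mul
      (measurable_pi_apply j)).aestronglyMeasurable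
  have hC0 : 0 ≤ C := (euclNorm_nonneg _).trans (hC x)
  have hψC : ∀ᵐ z ∂(P x).map ψ, euclNorm z ≤ C :=
    (ae_map_iff hψm.aemeasurable (measurable_euclNorm measurableSet_Iic)).2 (ae_of_all _ hC)
  have hw : euclNorm w ≤ C * (2 * d * B * L * C ^ 2 * euclNorm (θ₁ - θ₂)) := by
    simpa only [sub_sub_sub_cancel_right] using
      euclNorm_integral_indicator_unitHalfSpace_sub_le (hν x) (hP x) hC0 hψC (θ₁ - θcs) (θ₂ - θcs)
  calc _ = euclNorm (ψ x) * euclNorm w := by rw [hrank, frobNorm_vecMulVec]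
    _ ≤ C * (C * (2 * d * B * L * C ^ 2 * euclNorm (θ₁ - θ₂))) :=
        mul_le_mul (hC x) hw (euclNorm_nonneg w) hC0
    _ = _ := by ring

/-- Assume `ψ` is bounded measurable, `c_s(y) = θ_csᵀψ(y) + 1`
for some `θ_cs`, and for every `x` the image of `P(x,·)` under `ψ` has a
density `ℓ(·|x)` bounded by `L` with respect to the Gaussian measure on `ℝ^d`
with mean `ψ(x)` and identity covariance.  Then there is `ℓ_M < ∞` such that
for all `x` and all `θ¹, θ²`,
`‖∫ ψ(x) (𝟙{θ¹ᵀψ(y) < c_s(y)} − 𝟙{θ²ᵀψ(y) < c_s(y)}) ψ(y)ᵀ P(x,dy)‖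
  ≤ ℓ_M ‖θ¹ − θ²‖`. -/
theorem conditional_indicator_difference_lipschitz
    {X : Type*} [MeasurableSpace X] {d : ℕ}
    (P : Kernel X X) [IsMarkovKernel P]
    (ψ : X → Fin d → ℝ) (hψm : Measurable ψ)
    (hψb : ∃ C : ℝ, ∀ x, euclNorm (ψ x) ≤ C)
    (cs : X → ℝ) (hcsm : Measurable cs)
    (θcs : Fin d → ℝ) (hspan : ∀ y, cs y = θcs ⬝ᵥ ψ y + 1)
    (L : ℝ) (ℓ : X → (Fin d → ℝ) → ENNReal)
    (hℓm : ∀ x, Measurable (ℓ x))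
    (hdens : ∀ x, Measure.map ψ (P x) =
      (Measure.pi fun i : Fin d => gaussianReal (ψ x i) 1).withDensity (ℓ x))
    (hL : ∀ x z, ℓ x z ≤ ENNReal.ofReal L) :
    ∃ ℓM : ℝ, ∀ (x : X) (θ₁ θ₂ : Fin d → ℝ),
      frobNorm (Matrix.of fun i j =>
        ∫ y, ψ x i *
          (((if θ₁ ⬝ᵥ ψ y < cs y then (1 : ℝ) else 0) -
            (if θ₂ ⬝ᵥ ψ y < cs y then (1 : ℝ) else 0)) * ψ y j) ∂(P x)) ≤
      ℓM * euclNorm (θ₁ - θ₂) := by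
  exact conditional_indicator_difference_lipschitz_general P ψ hψm hψb cs θcs hspan
    (fun x i => gaussianReal (ψ x i) 1) _ L.toNNReal
    (fun x i => gaussianReal_le_smul_volume (ψ x i) one_ne_zero)
    (fun x => (hdens x).trans_le (withDensity_le_smul (hL x)))
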